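/- arXiv:1504.02598 — 2 statements merged into one kernel-verified Lean document; each statement's English description precedes it below -/
import Mathlib

section
/- Let n and q be integers with n > 2 and q ≥ 2, and let r be the largest prime divisor of n. Then gcd(Φ_n(q), ∏_{k=1}^{n−1}(q^k − 1)) = gcd(Φ_n(q), n); moreover this common value is either 1 (in which case r does not divide Φ_n(q)) or r (in which case r divides Φ_n(q)), and consequently Φ*_n(q) = Φ_n(q)/gcd(Φ_n(q), n). -/
/-- `Phi n q` is the `n`-th cyclotomic polynomial evaluated at `q`. -/
noncomputable def Phi (n q : ℕ) : ℕ :=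
  ((Polynomial.cyclotomic n ℤ).eval (q : ℤ)).toNat

/-- `PhiStar n q` is the largest divisor of `Phi n q` that is coprime to
`∏_{k=1}^{n-1} (q^k - 1)` (an empty product is `1`). -/
noncomputable def PhiStar (n q : ℕ) : ℕ :=
  sSup {m : ℕ | m ∣ Phi n q ∧ Nat.Coprime m (∏ k ∈ Finset.Ico 1 n, (q ^ k - 1))}

theorem Phi_cast (n q : ℕ) (hn : 2 < n) :
    ((Phi n q : ℕ) : ℤ) = (Polynomial.cyclotomic n ℤ).eval (q : ℤ) := by
  unfold Phi
  exact Int.toNat_of_nonneg (Polynomial.cyclotomic_pos hn _).le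

theorem Phi_pos (n q : ℕ) (hn : 2 < n) : 0 < Phi n q := by
  have h := Phi_cast n q hn
  have := Polynomial.cyclotomic_pos hn (q : ℤ)
  omega

theorem dvd_pow_sub_one_iff (p q k : ℕ) (hq : 2 ≤ q) :
    p ∣ q ^ k - 1 ↔ (q : ZMod p) ^ k = 1 := by
  rw [← ZMod.natCast_eq_zero_iff, Nat.cast_sub (Nat.one_le_pow _ _ (by omega)), sub_eq_zero]
  simp

/-- the prime-to-`p` part of `n` is the order of `q` modulo `p`. -/
theorem prim_of_dvd (n q p a m : ℕ) (hn : 2 < n) (hp : p.Prime)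
    (hnm : n = p ^ a * m) (hm : ¬ p ∣ m) (h : p ∣ Phi n q) :
    IsPrimitiveRoot (q : ZMod p) m := by
  have : Fact p.Prime := ⟨hp⟩
  have : NeZero (m : ZMod p) := ⟨by rwa [Ne, ZMod.natCast_eq_zero_iff]⟩
  rw [← Polynomial.isRoot_cyclotomic_prime_pow_mul_iff_of_charP (k := a) (p := p), ← hnm]
  have h1 : ((Phi n q : ℤ) : ZMod p) = 0 := by
    simpa [ZMod.natCast_eq_zero_iff] using h
  rw [Phi_cast n q hn] at h1
  have h2 := Polynomial.eval_intCast_map (Int.castRingHom (ZMod p)) (Polynomial.cyclotomic n ℤ) (q : ℤ)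
  rw [Polynomial.map_cyclotomic] at h2
  rw [Polynomial.IsRoot]
  simpa [h1] using h2

theorem Phi_mul_dvd (n q d p : ℕ) (hn : 2 < n) (hq : 2 ≤ q) (hp : p.Prime) (hd : n = d * p) :
    Phi n q * (q ^ d - 1) ∣ (q ^ d) ^ p - 1 := by
  have hmem : d ∈ n.properDivisors := by
    rw [Nat.mem_properDivisors]
    refine ⟨⟨p, hd⟩, ?_⟩
    have := hp.two_le
    rcases Nat.eq_zero_or_pos d with h0 | h0
    · omega
    · nlinarith
  obtain ⟨c, hc⟩ := Polynomial.X_pow_sub_one_mul_cyclotomic_dvd_X_pow_sub_one_of_dvd ℤ hmem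
  have := congrArg (Polynomial.eval (q : ℤ)) hc
  simp only [Polynomial.eval_sub, Polynomial.eval_pow, Polynomial.eval_X, Polynomial.eval_one,
    Polynomial.eval_mul, ← Phi_cast n q hn] at this
  rw [← pow_mul, ← hd, ← Int.natCast_dvd_natCast]
  rw [Nat.cast_mul, Nat.cast_sub (Nat.one_le_pow _ _ (by omega)),
    Nat.cast_sub (Nat.one_le_pow _ _ (by omega))]
  push_cast
  exact ⟨c.eval (q : ℤ), by rw [this]; ring⟩

theorem main_facts (n q p : ℕ) (hn : 2 < n) (hq : 2 ≤ q) (hp : p.Prime) (h : p ∣ Phi n q)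
    (hpn : p ∣ n) :
    (∃ k ∈ Finset.Ico 1 n, p ∣ q ^ k - 1) ∧ ¬ p ^ 2 ∣ Phi n q ∧
      (∀ r : ℕ, r.Prime → r ∣ n → r ≤ p) := by
  have : Fact p.Prime := ⟨hp⟩
  obtain ⟨a, m, hm, hnm⟩ := Nat.exists_eq_pow_mul_and_not_dvd (n := n) (by omega) p hp.ne_one
  have hprim := prim_of_dvd n q p a m hn hp hnm hm h
  have ha : a ≠ 0 := by
    rintro rfl
    simp at hnm
    exact hm (hnm ▸ hpn)
  obtain ⟨b, rfl⟩ := Nat.exists_eq_succ_of_ne_zero ha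
  have hm0 : m ≠ 0 := by rintro rfl; simp at hm
  have hp2 := hp.two_le
  have hq0 : (q : ZMod p) ≠ 0 := by
    intro h0
    have := hprim.pow_eq_one
    rw [h0, zero_pow hm0] at this
    exact zero_ne_one this
  have hmp : m ∣ p - 1 := hprim.dvd_of_pow_eq_one _ (ZMod.pow_card_sub_one_eq_one hq0)
  set d := p ^ b * m with hd
  have hdn : n = d * p := by rw [hnm, hd, pow_succ]; ring
  have hd0 : 0 < d := by positivity
  have hdp : p ∣ q ^ d - 1 := by
    rw [dvd_pow_sub_one_iff p q d hq, hd, mul_comm, pow_mul, hprim.pow_eq_one, one_pow]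
  have hx1 : 1 < q ^ d := Nat.one_lt_pow hd0.ne' (by omega)
  have hdvd := Phi_mul_dvd n q d p hn hq hp hdn
  refine ⟨⟨d, by rw [Finset.mem_Ico]; constructor <;> nlinarith, hdp⟩, ?_, ?_⟩
  · intro h2
    rcases hp.eq_two_or_odd' with h22 | hodd
    · subst h22
      have hm1 : m = 1 := by simpa using hmp
      have hb : b ≠ 0 := by rintro rfl; simp [hm1] at hnm; omega
      obtain ⟨c, rfl⟩ := Nat.exists_eq_succ_of_ne_zero hb
      have he : (q ^ d) ^ 2 - 1 = (q ^ d + 1) * (q ^ d - 1) := by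
        simpa using Nat.sq_sub_sq (q ^ d) 1
      rw [he] at hdvd
      have h3 := h2.trans (Nat.dvd_of_mul_dvd_mul_right (by omega) hdvd)
      have h4 : q ^ d = (q ^ (2 ^ c)) ^ 2 := by rw [← pow_mul, hd, hm1, pow_succ, mul_one]
      rw [h4] at h3
      have := Nat.mod_lt (q ^ 2 ^ c) (show 0 < 4 by norm_num)
      have h5 := Nat.mod_eq_zero_of_dvd h3
      norm_num at h5
      rw [Nat.add_mod, Nat.pow_mod] at h5
      interval_cases (q ^ 2 ^ c % 4) <;> simp at h5
    · have hnx : ¬ p ∣ q ^ d := fun hx => by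
        have := (Nat.dvd_sub_iff_right hx1.le hx).1 hdp
        exact hp.one_lt.ne' (Nat.dvd_one.1 this)
      have hl := padicValNat.pow_sub_pow (p := p) (x := q ^ d) (y := 1) hodd hx1 hdp hnx
        (n := p) hp.ne_zero
      rw [padicValNat_self, one_pow] at hl
      have h3 : p ^ (2 + padicValNat p (q ^ d - 1)) ∣ (q ^ d) ^ p - 1 := by
        rw [pow_add]
        exact (mul_dvd_mul h2 pow_padicValNat_dvd).trans hdvd
      have hne : (q ^ d) ^ p - 1 ≠ 0 := by
        have := Nat.one_lt_pow hp.ne_zero hx1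
        omega
      rw [padicValNat_dvd_iff_le hne] at h3
      omega
  · intro r hr hrn
    rw [hnm] at hrn
    rcases (hr.dvd_mul).1 hrn with h1 | h1
    · exact Nat.le_of_dvd hp.pos (hr.dvd_of_dvd_pow h1)
    · have := Nat.le_of_dvd (by omega) (h1.trans hmp)
      omega

theorem dvd_n_of_dvd_prod (n q p : ℕ) (hn : 2 < n) (hq : 2 ≤ q) (hp : p.Prime)
    (h : p ∣ Phi n q) (hP : p ∣ ∏ k ∈ Finset.Ico 1 n, (q ^ k - 1)) : p ∣ n := by
  by_contra hpn
  have hprim := prim_of_dvd n q p 0 n hn hp (by simp) hpn h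
  obtain ⟨k, hk, hdk⟩ := (hp.prime.dvd_finset_prod_iff _).1 hP
  rw [dvd_pow_sub_one_iff p q k hq] at hdk
  rw [Finset.mem_Ico] at hk
  have := Nat.le_of_dvd (by omega) (hprim.dvd_of_pow_eq_one _ hdk)
  omega

/-- a gcd with a single possible prime, which divides to first order only. -/
theorem gcd_eq_prime (A B r : ℕ) (hr : r.Prime) (hA : r ∣ A) (hB : r ∣ B)
    (h2 : ¬ r ^ 2 ∣ A) (hu : ∀ p : ℕ, p.Prime → p ∣ A → p ∣ B → p = r) : Nat.gcd A B = r := by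
  obtain ⟨c, hc⟩ := Nat.dvd_gcd hA hB
  have : c = 1 := by
    by_contra hc1
    obtain ⟨p, hp, hpc⟩ := Nat.exists_prime_and_dvd hc1
    have hpg : p ∣ Nat.gcd A B := hc ▸ hpc.mul_left r
    have := hu p hp (hpg.trans (Nat.gcd_dvd_left _ _)) (hpg.trans (Nat.gcd_dvd_right _ _))
    subst this
    apply h2
    refine Dvd.dvd.trans ?_ (Nat.gcd_dvd_left A B)
    rw [hc, sq]
    exact mul_dvd_mul_left _ hpc
  rw [hc, this, mul_one]

/-- Remark 5: for `n > 2`, `gcd(Φ_n(q), ∏_{k=1}^{n−1}(q^k − 1)) = gcd(Φ_n(q), n)`,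
this common value is `1` (and then `r ∤ Φ_n(q)`) or `r` (and then `r ∣ Φ_n(q)`),
where `r` is the largest prime divisor of `n`; consequently
`Φ*_n(q) = Φ_n(q)/gcd(Φ_n(q), n)`. -/
theorem gcd_eq_gcd_and_phiStar (n q r : ℕ) (hn : 2 < n) (hq : 2 ≤ q)
    (hr : r.Prime) (hrn : r ∣ n) (hmax : ∀ p : ℕ, p.Prime → p ∣ n → p ≤ r) :
    Nat.gcd (Phi n q) (∏ k ∈ Finset.Ico 1 n, (q ^ k - 1)) = Nat.gcd (Phi n q) n ∧
    ((Nat.gcd (Phi n q) n = 1 ∧ ¬ r ∣ Phi n q) ∨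
      (Nat.gcd (Phi n q) n = r ∧ r ∣ Phi n q)) ∧
    PhiStar n q = Phi n q / Nat.gcd (Phi n q) n := by
  have hpos := Phi_pos n q hn
  have hprod := fun p hp h => dvd_n_of_dvd_prod n q p hn hq hp h
  have hu : ∀ p : ℕ, p.Prime → p ∣ Phi n q → p ∣ n → p = r := fun p hp h hpn =>
    le_antisymm (hmax p hp hpn) ((main_facts n q p hn hq hp h hpn).2.2 r hr hrn)
  unfold PhiStar
  set P := ∏ k ∈ Finset.Ico 1 n, (q ^ k - 1) with hP
  by_cases h : r ∣ Phi n q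
  · obtain ⟨⟨k, hk, hrk⟩, h2, -⟩ := main_facts n q r hn hq hr h hrn
    have hrP : r ∣ P := hrk.trans (Finset.dvd_prod_of_mem _ hk)
    have g1 : Nat.gcd (Phi n q) n = r := gcd_eq_prime _ _ r hr h hrn h2 hu
    have g2 : Nat.gcd (Phi n q) P = r := gcd_eq_prime _ _ r hr h hrP h2
      fun p hp hA hB => hu p hp hA (hprod p hp hA hB)
    refine ⟨g2.trans g1.symm, Or.inr ⟨g1, h⟩, ?_⟩
    rw [g1]
    obtain ⟨c, hc⟩ := h
    have hdiv : Phi n q / r = c := by rw [hc, Nat.mul_div_cancel_left _ hr.pos]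
    rw [hdiv]
    apply IsGreatest.csSup_eq
    refine ⟨⟨⟨r, by rw [hc, mul_comm]⟩, ?_⟩, ?_⟩
    · refine Nat.coprime_of_dvd fun p hp hpc hpP => ?_
      have hA : p ∣ Phi n q := hc ▸ hpc.mul_left r
      have := hu p hp hA (hprod p hp hA hpP)
      subst this
      exact h2 (by rw [hc, sq]; exact mul_dvd_mul_left _ hpc)
    · rintro m ⟨hm1, hm2⟩
      rw [hc] at hm1
      have : m ∣ c := (hm2.coprime_dvd_right hrP).dvd_of_dvd_mul_left hm1
      refine Nat.le_of_dvd (Nat.pos_of_ne_zero ?_) this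
      rintro rfl
      simp at hc
      omega
  · have g1 : Nat.gcd (Phi n q) n = 1 := Nat.coprime_of_dvd fun p hp hA hB =>
      h (hu p hp hA hB ▸ hA)
    have g2 : Nat.gcd (Phi n q) P = 1 := Nat.coprime_of_dvd fun p hp hA hB =>
      h (hu p hp hA (hprod p hp hA hB) ▸ hA)
    refine ⟨g2.trans g1.symm, Or.inl ⟨g1, h⟩, ?_⟩
    rw [g1, Nat.div_one]
    apply IsGreatest.csSup_eq
    exact ⟨⟨dvd_rfl, g2⟩, fun m hm => Nat.le_of_dvd hpos hm.1⟩
end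

section
/- For all integers n ≥ 3 and q ≥ 2, we have n·Φ*_n(q) ≥ Φ_n(q). -/
theorem phi_cast (n q : ℕ) (hq : 2 ≤ q) :
    ((Phi n q : ℕ) : ℤ) = (Polynomial.cyclotomic n ℤ).eval (q : ℤ) := by
  unfold Phi
  exact Int.toNat_of_nonneg (Polynomial.cyclotomic_nonneg n (by exact_mod_cast (by omega : 1 ≤ q)))

theorem phi_pos (n q : ℕ) (hq : 2 ≤ q) : 0 < Phi n q := by
  have h := Polynomial.cyclotomic_pos' n (x := (q : ℤ)) (by exact_mod_cast (by omega : 1 < q))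
  rw [← phi_cast n q hq] at h
  exact_mod_cast h

/-- `Φ_n(q)` divides `(q^n - 1)/(q^d - 1)` for a proper divisor `d` of `n = d * e`. -/
theorem phi_dvd_sum (d e q : ℕ) (hq : 2 ≤ q) (hd : 0 < d) (he : 1 < e) :
    ((Phi (d * e) q : ℕ) : ℤ) ∣ ∑ i ∈ Finset.range e, ((q : ℤ) ^ d) ^ i := by
  have hmem : d ∈ (d * e).properDivisors := by
    rw [Nat.mem_properDivisors]
    exact ⟨dvd_mul_right _ _, by nlinarith⟩
  have h := Polynomial.X_pow_sub_one_mul_cyclotomic_dvd_X_pow_sub_one_of_dvd ℤ hmem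
  have h2 := Polynomial.eval_dvd (x := (q : ℤ)) h
  simp only [Polynomial.eval_mul, Polynomial.eval_sub, Polynomial.eval_pow, Polynomial.eval_X,
    Polynomial.eval_one] at h2
  rw [← phi_cast _ q hq, pow_mul, ← mul_geom_sum ((q : ℤ) ^ d) e] at h2
  refine (mul_dvd_mul_iff_left ?_).1 h2
  have : (1 : ℤ) < (q : ℤ) ^ d := one_lt_pow₀ (by exact_mod_cast (by omega : 1 < q)) hd.ne'
  omega

theorem prime_dvd_index (d e q p : ℕ) (hq : 2 ≤ q) (hd : 0 < d) (he : 1 < e)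
    (hA : p ∣ Phi (d * e) q) (hp : (p : ℤ) ∣ (q : ℤ) ^ d - 1) : p ∣ e := by
  have h1 : (p : ℤ) ∣ ∑ i ∈ Finset.range e, ((q : ℤ) ^ d) ^ i :=
    (Int.natCast_dvd_natCast.2 hA).trans (phi_dvd_sum d e q hq hd he)
  have h2 : (p : ℤ) ∣ ∑ i ∈ Finset.range e, (((q : ℤ) ^ d) ^ i - 1) := by
    refine Finset.dvd_sum fun i _ => hp.trans ?_
    simpa using sub_dvd_pow_sub_pow ((q : ℤ) ^ d) 1 i
  rw [Finset.sum_sub_distrib] at h2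
  have h3 := (dvd_sub_right h1).1 h2
  simp at h3
  exact_mod_cast h3

theorem bad_prime (n q p : ℕ) (hn : 3 ≤ n) (hq : 2 ≤ q) (hp : p.Prime) (hA : p ∣ Phi n q)
    (k : ℕ) (hk : 1 ≤ k) (hkn : k < n) (hpk : p ∣ q ^ k - 1) : p ∣ n ∧ ¬ p ^ 2 ∣ Phi n q := by
  have hAn : p ∣ q ^ n - 1 := by
    have h := Polynomial.eval_dvd (x := (q : ℤ)) (Polynomial.cyclotomic.dvd_X_pow_sub_one n ℤ)
    rw [← phi_cast n q hq] at h
    simp only [Polynomial.eval_sub, Polynomial.eval_pow, Polynomial.eval_X,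
      Polynomial.eval_one] at h
    have h' := (Int.natCast_dvd_natCast.2 hA).trans h
    have h1 : 1 ≤ q ^ n := Nat.one_le_pow _ _ (by omega)
    zify [h1]
    exact h'
  have hg := Nat.dvd_gcd hpk hAn
  rw [Nat.pow_sub_one_gcd_pow_sub_one] at hg
  have hd0 : 0 < k.gcd n := Nat.gcd_pos_of_pos_left _ hk
  have hdk : k.gcd n ≤ k := Nat.gcd_le_left _ hk
  obtain ⟨e, he⟩ := Nat.gcd_dvd_right k n
  generalize k.gcd n = d at *
  have hgz : (p : ℤ) ∣ (q : ℤ) ^ d - 1 := by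
    have h1 : 1 ≤ q ^ d := Nat.one_le_pow _ _ (by omega)
    zify [h1] at hg
    exact hg
  have he1 : 1 < e := by
    by_contra hcon
    have : d * e ≤ d * 1 := Nat.mul_le_mul_left _ (by omega)
    omega
  have hpe : p ∣ e := prime_dvd_index d e q p hq hd0 he1 (he ▸ hA) hgz
  obtain ⟨f, hf⟩ := hpe
  have hnf : n = (d * f) * p := by rw [he, hf]; ring
  refine ⟨⟨d * f, by rw [hnf]; ring⟩, ?_⟩
  intro hsq
  have hm0 : 0 < d * f := by
    rcases Nat.eq_zero_or_pos (d * f) with h | h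
    · rw [h] at hnf; omega
    · exact h
  have hb : (p : ℤ) ∣ (q : ℤ) ^ (d * f) - 1 := by
    rw [pow_mul]
    exact hgz.trans (by simpa using sub_dvd_pow_sub_pow ((q : ℤ) ^ d) 1 f)
  have hsum := phi_dvd_sum (d * f) p q hq hm0 hp.one_lt
  rw [← hnf] at hsum
  have hsq2 := (Int.natCast_dvd_natCast.2 hsq).trans hsum
  generalize d * f = m at *
  rcases hp.eq_two_or_odd' with rfl | hodd
  · have hqodd : ¬ (2 : ℤ) ∣ q := by
      intro h
      have h2 : (2 : ℤ) ∣ (q : ℤ) ^ m := dvd_pow h hm0.ne'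
      push_cast at hb
      omega
    rcases Nat.even_or_odd' m with ⟨c, hc | hc⟩
    · simp only [Finset.sum_range_succ, Finset.sum_range_zero, pow_zero, pow_one, zero_add] at hsq2
      have hoc : Odd ((q : ℤ) ^ c) := by
        apply Odd.pow
        rw [← Int.not_even_iff_odd, even_iff_two_dvd]; exact hqodd
      obtain ⟨t, ht⟩ := hoc
      have hmm : (q : ℤ) ^ m = 4 * (t * t + t) + 1 := by
        rw [hc, mul_comm, pow_mul, ht]; ring
      rw [hmm] at hsq2
      push_cast at hsq2
      omega
    · have h2 : 2 ∣ m := by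
        refine prime_dvd_index 2 m q 2 hq (by norm_num) (by omega) ?_ ?_
        · rw [mul_comm, ← hnf]; exact hA
        · have hoc : Odd (q : ℤ) := by
            rw [← Int.not_even_iff_odd, even_iff_two_dvd]; exact hqodd
          obtain ⟨t, ht⟩ := hoc
          rw [ht]
          exact ⟨2 * t ^ 2 + 2 * t, by push_cast; ring⟩
      omega
  · obtain ⟨b, hb⟩ := hb
    have hbb : (q : ℤ) ^ m = 1 + p * b := by linarith
    have h := odd_sq_dvd_geom_sum₂_sub (R := ℤ) (a := 1) (b := b) hodd
    simp only [one_pow, mul_one] at h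
    rw [hbb] at hsq2
    push_cast at hsq2
    have h3 := (dvd_sub_right hsq2).1 h
    have h4 : p ^ 2 ∣ p := by exact_mod_cast h3
    have h5 := Nat.le_of_dvd hp.pos h4
    have := hp.two_le
    nlinarith

/-- For all `n ≥ 3` and `q ≥ 2`, `n·Φ*_n(q) ≥ Φ_n(q)`. -/
theorem n_mul_phiStar_ge (n q : ℕ) (hn : 3 ≤ n) (hq : 2 ≤ q) :
    Phi n q ≤ n * PhiStar n q := by
  have hpos := phi_pos n q hq
  obtain ⟨m, hm⟩ := Nat.gcd_dvd_left (Phi n q) n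
  have hle : m ≤ PhiStar n q := by
    unfold PhiStar
    refine le_csSup ⟨Phi n q, fun x hx => Nat.le_of_dvd hpos hx.1⟩ ⟨⟨_, hm.trans (mul_comm _ _)⟩, ?_⟩
    refine Nat.Coprime.prod_right fun k hk => ?_
    rw [Finset.mem_Ico] at hk
    refine Nat.coprime_of_dvd fun p hp hpm hpk => ?_
    have hA : p ∣ Phi n q := by rw [hm]; exact hpm.mul_left _
    obtain ⟨h1, h2⟩ := bad_prime n q p hn hq hp hA k hk.1 hk.2 hpk
    apply h2
    rw [hm, sq]
    exact mul_dvd_mul (Nat.dvd_gcd hA h1) hpm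
  calc Phi n q = (Phi n q).gcd n * m := hm
    _ ≤ n * PhiStar n q := Nat.mul_le_mul (Nat.gcd_le_right _ (by omega)) hle
end
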